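/- arXiv:2411.14240 — 9 statements merged into one kernel-verified Lean document; each statement's English description precedes it below -/
import Mathlib

section
/- Let L > 0 and r₁, r₂ > 0 satisfy the strict triangle inequalities |r₁ − r₂| < 2L < r₁ + r₂. Set c₃ = (r₂² − r₁² − 4L²)/(4L²) and c₄ = r₁²/(4L²). Then: (i) t² + c₃t + c₄ > 0 for every t ∈ [0, 1]; and (ii) for all real c₁, c₂, ∫₀¹ (c₁t + c₂)/√(t² + c₃t + c₄) dt = −(c₁/(2L))(r₁ − r₂) + (1/(8L²))·[c₁(4L² + r₁² − r₂²) + 8c₂L²]·ln((2L + r₁ + r₂)/(r₁ + r₂ − 2L)). -/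
/-- For $L>0$ and $r_1, r_2>0$ with $|r_1-r_2| < 2L < r_1+r_2$, setting
$c_3 = (r_2^2-r_1^2-4L^2)/(4L^2)$ and $c_4 = r_1^2/(4L^2)$:
(i) $t^2+c_3 t+c_4 > 0$ on $[0,1]$, and (ii) for all $c_1,c_2$,
$\int_0^1 \frac{c_1 t + c_2}{\sqrt{t^2+c_3 t+c_4}}\,dt
 = -\frac{c_1}{2L}(r_1-r_2) + \frac{1}{8L^2}\left[c_1(4L^2+r_1^2-r_2^2)+8c_2L^2\right]
   \ln\frac{2L+r_1+r_2}{r_1+r_2-2L}$. -/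
theorem segment_potential_integral (L r₁ r₂ c₃ c₄ : ℝ)
    (hL : 0 < L) (hr₁ : 0 < r₁) (hr₂ : 0 < r₂)
    (htri₁ : |r₁ - r₂| < 2 * L) (htri₂ : 2 * L < r₁ + r₂)
    (hc₃ : c₃ = (r₂ ^ 2 - r₁ ^ 2 - 4 * L ^ 2) / (4 * L ^ 2))
    (hc₄ : c₄ = r₁ ^ 2 / (4 * L ^ 2)) :
    (∀ t ∈ Set.Icc (0 : ℝ) 1, 0 < t ^ 2 + c₃ * t + c₄) ∧
    ∀ c₁ c₂ : ℝ,
      (∫ t in (0 : ℝ)..1, (c₁ * t + c₂) / Real.sqrt (t ^ 2 + c₃ * t + c₄)) =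
        -(c₁ / (2 * L)) * (r₁ - r₂) +
          (1 / (8 * L ^ 2)) * (c₁ * (4 * L ^ 2 + r₁ ^ 2 - r₂ ^ 2) + 8 * c₂ * L ^ 2) *
            Real.log ((2 * L + r₁ + r₂) / (r₁ + r₂ - 2 * L)) := by
  have hD : 0 < 4 * c₄ - c₃ ^ 2 := by
    obtain ⟨h1, h2⟩ := abs_lt.mp htri₁
    have e : 4 * c₄ - c₃ ^ 2 = ((r₁ + 2 * L + r₂) * (r₁ + 2 * L - r₂) *
        ((r₂ + r₁ - 2 * L) * (r₂ - r₁ + 2 * L))) / (16 * L ^ 4) := by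
      rw [hc₃, hc₄]; field_simp; ring
    rw [e]
    have a1 : 0 < r₁ + 2 * L + r₂ := by linarith
    have a2 : 0 < r₁ + 2 * L - r₂ := by linarith
    have a3 : 0 < r₂ + r₁ - 2 * L := by linarith
    have a4 : 0 < r₂ - r₁ + 2 * L := by linarith
    positivity
  have hQ : ∀ t : ℝ, 0 < t ^ 2 + c₃ * t + c₄ := fun t => by
    nlinarith [sq_nonneg (2 * t + c₃)]
  have hP : ∀ t : ℝ, 0 < 2 * t + c₃ + 2 * Real.sqrt (t ^ 2 + c₃ * t + c₄) := fun t => by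
    have hs := Real.sq_sqrt (hQ t).le
    have hp := Real.sqrt_pos.mpr (hQ t)
    by_contra hn
    push Not at hn
    nlinarith
  refine ⟨fun t _ => hQ t, fun c₁ c₂ => ?_⟩
  have hderiv : ∀ t ∈ Set.uIcc (0 : ℝ) 1, HasDerivAt
      (fun t : ℝ => c₁ * Real.sqrt (t ^ 2 + c₃ * t + c₄) + (c₂ - c₁ * c₃ / 2) *
        Real.log (2 * t + c₃ + 2 * Real.sqrt (t ^ 2 + c₃ * t + c₄)))
      ((c₁ * t + c₂) / Real.sqrt (t ^ 2 + c₃ * t + c₄)) t := by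
    intro t _
    have hp := Real.sqrt_pos.mpr (hQ t)
    have hPt := hP t
    have hq : HasDerivAt (fun t : ℝ => t ^ 2 + c₃ * t + c₄) (2 * t + c₃) t := by
      have := (((hasDerivAt_id t).pow 2).add ((hasDerivAt_id t).const_mul c₃)).add_const c₄
      refine HasDerivAt.congr_deriv this ?_
      simp
    have hs := hq.sqrt (hQ t).ne'
    have hl := ((((hasDerivAt_id t).const_mul 2).add_const c₃).add (hs.const_mul 2)).log hPt.ne'
    have h := (hs.const_mul c₁).add (hl.const_mul (c₂ - c₁ * c₃ / 2))
    refine HasDerivAt.congr_deriv h ?_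
    simp only [id, Pi.add_apply]
    generalize Real.sqrt (t ^ 2 + c₃ * t + c₄) = s at *
    have hne := hPt.ne'
    have e : (2 * 1 + 2 * ((2 * t + c₃) / (2 * s))) / (2 * t + c₃ + 2 * s) = 1 / s := by
      rw [div_eq_div_iff hne hp.ne']
      field_simp
      ring
    rw [e]
    field_simp
    ring
  have hcont : Continuous
      (fun t : ℝ => (c₁ * t + c₂) / Real.sqrt (t ^ 2 + c₃ * t + c₄)) :=
    Continuous.div (by fun_prop) (by fun_prop) (fun t => (Real.sqrt_pos.mpr (hQ t)).ne')
  rw [intervalIntegral.integral_eq_sub_of_hasDerivAt hderiv (hcont.intervalIntegrable 0 1)]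
  have hP0 := hP 0
  have hP1 := hP 1
  have s0 : Real.sqrt ((0 : ℝ) ^ 2 + c₃ * 0 + c₄) = r₁ / (2 * L) := by
    rw [show (0 : ℝ) ^ 2 + c₃ * 0 + c₄ = (r₁ / (2 * L)) ^ 2 by rw [hc₄]; field_simp; ring]
    exact Real.sqrt_sq (by positivity)
  have s1 : Real.sqrt ((1 : ℝ) ^ 2 + c₃ * 1 + c₄) = r₂ / (2 * L) := by
    rw [show (1 : ℝ) ^ 2 + c₃ * 1 + c₄ = (r₂ / (2 * L)) ^ 2 by
      rw [hc₃, hc₄]; field_simp; ring]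
    exact Real.sqrt_sq (by positivity)
  rw [s0] at hP0
  rw [s1] at hP1
  have hb : 0 < r₁ + r₂ - 2 * L := by linarith
  have hlog : Real.log ((2 * L + r₁ + r₂) / (r₁ + r₂ - 2 * L)) =
      Real.log (2 * 1 + c₃ + 2 * (r₂ / (2 * L))) -
        Real.log (2 * 0 + c₃ + 2 * (r₁ / (2 * L))) := by
    rw [← Real.log_div hP1.ne' hP0.ne']
    congr 1
    rw [div_eq_div_iff hb.ne' hP0.ne', hc₃]
    field_simp
    ring
  rw [hlog]
  simp only [s0, s1]
  have hc : (1 / (8 * L ^ 2)) * (c₁ * (4 * L ^ 2 + r₁ ^ 2 - r₂ ^ 2) + 8 * c₂ * L ^ 2) =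
      c₂ - c₁ * c₃ / 2 := by
    rw [hc₃]; field_simp; ring
  rw [hc]
  ring
end

section
/- Let 0 ≤ A < 1/3 and let p = (ξ, η, ζ) ∈ ℝ³ not lie on the segment S = {(ξ, 0, 0) : −1−A ≤ ξ ≤ 1−A}. Then U is differentiable at p and its partial derivatives are ∂U/∂ξ = 3A·ln((s+2)/(s−2)) − (4d + 12A·s)/(s² − d²), ∂U/∂η = 16η(3A·d + s)/((s² − 4)(s² − d²)), and ∂U/∂ζ = 16ζ(3A·d + s)/((s² − 4)(s² − d²)), where s and d are evaluated at p. (Equivalently, the Hamiltonian equations of motion for a particle attracted by the non-homogeneous segment are ξ̈ = (4d + 12A·s)/(s² − d²) − 3A·ln((s+2)/(s−2)), η̈ = −16η(3A·d + s)/((s² − 4)(s² − d²)), ζ̈ = −16ζ(3A·d + s)/((s² − 4)(s² − d²)).) -/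
/-- Distance from the point $(\xi,\eta,\zeta)$ to the endpoint $(1-A,0,0)$. -/
noncomputable def R₁ (A ξ η ζ : ℝ) : ℝ := Real.sqrt ((ξ + A - 1) ^ 2 + η ^ 2 + ζ ^ 2)

/-- Distance from the point $(\xi,\eta,\zeta)$ to the endpoint $(-1-A,0,0)$. -/
noncomputable def R₂ (A ξ η ζ : ℝ) : ℝ := Real.sqrt ((ξ + A + 1) ^ 2 + η ^ 2 + ζ ^ 2)

/-- Sum of distances $s = R_1 + R_2$. -/
noncomputable def sVar (A ξ η ζ : ℝ) : ℝ := R₁ A ξ η ζ + R₂ A ξ η ζ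

/-- Difference of distances $d = R_1 - R_2$. -/
noncomputable def dVar (A ξ η ζ : ℝ) : ℝ := R₁ A ξ η ζ - R₂ A ξ η ζ

/-- The scaled potential
$U = 3Ad - \frac14 (3Ads + 4)\ln\frac{s+2}{s-2}$ of the non-homogeneous segment. -/
noncomputable def U (A ξ η ζ : ℝ) : ℝ :=
  3 * A * dVar A ξ η ζ -
    (1 / 4) * (3 * A * dVar A ξ η ζ * sVar A ξ η ζ + 4) *
      Real.log ((sVar A ξ η ζ + 2) / (sVar A ξ η ζ - 2))

/-- Positivity facts off the segment. -/
lemma off_segment (A ξ η ζ : ℝ) (hp : ¬ (η = 0 ∧ ζ = 0 ∧ -1 - A ≤ ξ ∧ ξ ≤ 1 - A)) :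
    0 < (ξ + A - 1) ^ 2 + η ^ 2 + ζ ^ 2 ∧ 0 < (ξ + A + 1) ^ 2 + η ^ 2 + ζ ^ 2 ∧
      2 < R₁ A ξ η ζ + R₂ A ξ η ζ := by
  by_cases hr : η = 0 ∧ ζ = 0
  · obtain ⟨h1, h2⟩ := hr
    subst h1 h2
    have h : ξ + A < -1 ∨ 1 < ξ + A := by
      by_contra hc
      push Not at hc
      exact hp ⟨rfl, rfl, by linarith [hc.1], by linarith [hc.2]⟩
    have ha : R₁ A ξ 0 0 = |ξ + A - 1| := by simp [R₁, Real.sqrt_sq_eq_abs]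
    have hb : R₂ A ξ 0 0 = |ξ + A + 1| := by simp [R₂, Real.sqrt_sq_eq_abs]
    rw [ha, hb]
    rcases h with h | h
    · exact ⟨by nlinarith, by nlinarith,
        by linarith [neg_le_abs (ξ + A - 1), neg_le_abs (ξ + A + 1)]⟩
    · exact ⟨by nlinarith, by nlinarith,
        by linarith [le_abs_self (ξ + A - 1), le_abs_self (ξ + A + 1)]⟩
  · have hr' : 0 < η ^ 2 + ζ ^ 2 := by
      by_cases h : η = 0
      · have h2 : ζ ≠ 0 := fun h2 => hr ⟨h, h2⟩
        positivity
      · positivity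
    have ha : 1 - (ξ + A) < R₁ A ξ η ζ := by
      apply Real.lt_sqrt_of_sq_lt
      nlinarith
    have hb : 1 + (ξ + A) < R₂ A ξ η ζ := by
      apply Real.lt_sqrt_of_sq_lt
      nlinarith
    exact ⟨by nlinarith [sq_nonneg (ξ + A - 1)], by nlinarith [sq_nonneg (ξ + A + 1)],
      by linarith⟩

/-- Chain rule for the potential as a function of the two distances. -/
lemma chain_rule (A : ℝ) (f g : ℝ → ℝ) (f' g' t a b : ℝ) (hf : HasDerivAt f f' t)
    (hg : HasDerivAt g g' t) (hfa : f t = a) (hgb : g t = b) (hs : 2 < a + b) :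
    HasDerivAt (fun t => 3 * A * (f t - g t) -
        (1 / 4) * (3 * A * (f t - g t) * (f t + g t) + 4) *
          Real.log ((f t + g t + 2) / (f t + g t - 2)))
      (3 * A * (f' - g') - (3 / 2) * A * (a * f' - b * g') *
          Real.log ((a + b + 2) / (a + b - 2)) +
        (3 * A * (a - b) * (a + b) + 4) * (f' + g') / ((a + b + 2) * (a + b - 2))) t := by
  subst hfa hgb
  have h1 : f t + g t - 2 ≠ 0 := by linarith
  have h2 : f t + g t + 2 ≠ 0 := by linarith
  have hS := hf.add hg
  have hD := hf.sub hg
  have hL := ((hS.add_const 2).div (hS.sub_const 2) h1).log (div_ne_zero h2 h1)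
  have h := (hD.const_mul (3 * A)).sub
    (((((hD.const_mul (3 * A)).mul hS).add_const 4).const_mul (1 / 4)).mul hL)
  refine h.congr_deriv ?_
  simp only [Pi.add_apply, Pi.sub_apply, Pi.div_apply, Pi.mul_apply]
  field_simp
  ring

/-- For $0 \le A < 1/3$ and a point $p = (\xi,\eta,\zeta)$ off the segment
$S = \{(\xi,0,0) : -1-A \le \xi \le 1-A\}$, the potential $U$ is differentiable at $p$
with partial derivatives
$\partial U/\partial\xi = 3A\ln\frac{s+2}{s-2} - \frac{4d+12As}{s^2-d^2}$,
$\partial U/\partial\eta = \frac{16\eta(3Ad+s)}{(s^2-4)(s^2-d^2)}$,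
$\partial U/\partial\zeta = \frac{16\zeta(3Ad+s)}{(s^2-4)(s^2-d^2)}$. -/
theorem potential_partial_derivatives (A ξ η ζ : ℝ) (hA0 : 0 ≤ A) (hA : A < 1 / 3)
    (hp : ¬ (η = 0 ∧ ζ = 0 ∧ -1 - A ≤ ξ ∧ ξ ≤ 1 - A)) :
    DifferentiableAt ℝ (fun p : ℝ × ℝ × ℝ => U A p.1 p.2.1 p.2.2) (ξ, η, ζ) ∧
    HasDerivAt (fun t => U A t η ζ)
      (3 * A * Real.log ((sVar A ξ η ζ + 2) / (sVar A ξ η ζ - 2)) -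
        (4 * dVar A ξ η ζ + 12 * A * sVar A ξ η ζ) /
          (sVar A ξ η ζ ^ 2 - dVar A ξ η ζ ^ 2)) ξ ∧
    HasDerivAt (fun t => U A ξ t ζ)
      (16 * η * (3 * A * dVar A ξ η ζ + sVar A ξ η ζ) /
        ((sVar A ξ η ζ ^ 2 - 4) * (sVar A ξ η ζ ^ 2 - dVar A ξ η ζ ^ 2))) η ∧
    HasDerivAt (fun t => U A ξ η t)
      (16 * ζ * (3 * A * dVar A ξ η ζ + sVar A ξ η ζ) /
        ((sVar A ξ η ζ ^ 2 - 4) * (sVar A ξ η ζ ^ 2 - dVar A ξ η ζ ^ 2))) ζ := by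
  obtain ⟨h1, h2, hs⟩ := off_segment A ξ η ζ hp
  have ha : 0 < R₁ A ξ η ζ := Real.sqrt_pos.2 h1
  have hb : 0 < R₂ A ξ η ζ := Real.sqrt_pos.2 h2
  have ha2 : R₁ A ξ η ζ ^ 2 = (ξ + A - 1) ^ 2 + η ^ 2 + ζ ^ 2 := Real.sq_sqrt h1.le
  have hb2 : R₂ A ξ η ζ ^ 2 = (ξ + A + 1) ^ 2 + η ^ 2 + ζ ^ 2 := Real.sq_sqrt h2.le
  have hx : ξ + A = (R₂ A ξ η ζ ^ 2 - R₁ A ξ η ζ ^ 2) / 4 := by rw [ha2, hb2]; ring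
  have hs1 : R₁ A ξ η ζ + R₂ A ξ η ζ - 2 ≠ 0 := by linarith
  have hs2 : R₁ A ξ η ζ + R₂ A ξ η ζ + 2 ≠ 0 := by linarith
  have hq : (R₁ A ξ η ζ + R₂ A ξ η ζ) ^ 2 - (R₁ A ξ η ζ - R₂ A ξ η ζ) ^ 2
      = 4 * R₁ A ξ η ζ * R₂ A ξ η ζ := by ring
  have hq4 : (R₁ A ξ η ζ + R₂ A ξ η ζ) ^ 2 - 4
      = (R₁ A ξ η ζ + R₂ A ξ η ζ + 2) * (R₁ A ξ η ζ + R₂ A ξ η ζ - 2) := by ring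
  refine ⟨?_, ?_, ?_, ?_⟩
  · have d1 : DifferentiableAt ℝ (fun p : ℝ × ℝ × ℝ => R₁ A p.1 p.2.1 p.2.2) (ξ, η, ζ) := by
      unfold R₁
      exact DifferentiableAt.sqrt (by fun_prop) h1.ne'
    have d2 : DifferentiableAt ℝ (fun p : ℝ × ℝ × ℝ => R₂ A p.1 p.2.1 p.2.2) (ξ, η, ζ) := by
      unfold R₂
      exact DifferentiableAt.sqrt (by fun_prop) h2.ne'
    unfold U sVar dVar
    have dl : DifferentiableAt ℝ (fun p : ℝ × ℝ × ℝ =>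
        Real.log ((R₁ A p.1 p.2.1 p.2.2 + R₂ A p.1 p.2.1 p.2.2 + 2) /
          (R₁ A p.1 p.2.1 p.2.2 + R₂ A p.1 p.2.1 p.2.2 - 2))) (ξ, η, ζ) := by
      refine DifferentiableAt.log ?_ (div_ne_zero hs2 hs1)
      simp only [div_eq_mul_inv]
      have di : DifferentiableAt ℝ (fun p : ℝ × ℝ × ℝ =>
          (R₁ A p.1 p.2.1 p.2.2 + R₂ A p.1 p.2.1 p.2.2 - 2)⁻¹) (ξ, η, ζ) :=
        DifferentiableAt.fun_inv (by fun_prop) hs1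
      fun_prop
    fun_prop
  · have e1 : HasDerivAt (fun t => R₁ A t η ζ) ((ξ + A - 1) / R₁ A ξ η ζ) ξ := by
      have h : HasDerivAt (fun t : ℝ => (t + A - 1) ^ 2 + η ^ 2 + ζ ^ 2) (2 * (ξ + A - 1)) ξ := by
        refine HasDerivAt.congr_deriv ((((((hasDerivAt_id ξ).add_const A).sub_const 1).pow 2).add_const (η ^ 2)).add_const (ζ ^ 2)) ?_
        simp
      exact (h.sqrt h1.ne').congr_deriv (mul_div_mul_left _ _ two_ne_zero)
    have e2 : HasDerivAt (fun t => R₂ A t η ζ) ((ξ + A + 1) / R₂ A ξ η ζ) ξ := by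
      have h : HasDerivAt (fun t : ℝ => (t + A + 1) ^ 2 + η ^ 2 + ζ ^ 2) (2 * (ξ + A + 1)) ξ := by
        refine HasDerivAt.congr_deriv ((((((hasDerivAt_id ξ).add_const A).add_const 1).pow 2).add_const (η ^ 2)).add_const (ζ ^ 2)) ?_
        simp
      exact (h.sqrt h2.ne').congr_deriv (mul_div_mul_left _ _ two_ne_zero)
    refine (chain_rule A _ _ _ _ ξ _ _ e1 e2 rfl rfl hs).congr_deriv ?_
    unfold sVar dVar
    rw [hq, hx]
    generalize Real.log ((R₁ A ξ η ζ + R₂ A ξ η ζ + 2) / (R₁ A ξ η ζ + R₂ A ξ η ζ - 2)) = L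
    generalize R₁ A ξ η ζ = a at *
    generalize R₂ A ξ η ζ = b at *
    field_simp
    ring
  · have e1 : HasDerivAt (fun t => R₁ A ξ t ζ) (η / R₁ A ξ η ζ) η := by
      have h : HasDerivAt (fun t : ℝ => (ξ + A - 1) ^ 2 + t ^ 2 + ζ ^ 2) (2 * η) η := by
        refine HasDerivAt.congr_deriv ((((hasDerivAt_id η).pow 2).const_add ((ξ + A - 1) ^ 2)).add_const (ζ ^ 2)) ?_
        simp
      exact (h.sqrt h1.ne').congr_deriv (mul_div_mul_left _ _ two_ne_zero)
    have e2 : HasDerivAt (fun t => R₂ A ξ t ζ) (η / R₂ A ξ η ζ) η := by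
      have h : HasDerivAt (fun t : ℝ => (ξ + A + 1) ^ 2 + t ^ 2 + ζ ^ 2) (2 * η) η := by
        refine HasDerivAt.congr_deriv ((((hasDerivAt_id η).pow 2).const_add ((ξ + A + 1) ^ 2)).add_const (ζ ^ 2)) ?_
        simp
      exact (h.sqrt h2.ne').congr_deriv (mul_div_mul_left _ _ two_ne_zero)
    refine (chain_rule A _ _ _ _ η _ _ e1 e2 rfl rfl hs).congr_deriv ?_
    unfold sVar dVar
    rw [hq, hq4]
    generalize Real.log ((R₁ A ξ η ζ + R₂ A ξ η ζ + 2) / (R₁ A ξ η ζ + R₂ A ξ η ζ - 2)) = L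
    generalize R₁ A ξ η ζ = a at *
    generalize R₂ A ξ η ζ = b at *
    field_simp
    ring
  · have e1 : HasDerivAt (fun t => R₁ A ξ η t) (ζ / R₁ A ξ η ζ) ζ := by
      have h : HasDerivAt (fun t : ℝ => (ξ + A - 1) ^ 2 + η ^ 2 + t ^ 2) (2 * ζ) ζ := by
        refine HasDerivAt.congr_deriv ((((hasDerivAt_id ζ).pow 2).const_add ((ξ + A - 1) ^ 2 + η ^ 2))) ?_
        simp
      exact (h.sqrt h1.ne').congr_deriv (mul_div_mul_left _ _ two_ne_zero)
    have e2 : HasDerivAt (fun t => R₂ A ξ η t) (ζ / R₂ A ξ η ζ) ζ := by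
      have h : HasDerivAt (fun t : ℝ => (ξ + A + 1) ^ 2 + η ^ 2 + t ^ 2) (2 * ζ) ζ := by
        refine HasDerivAt.congr_deriv ((((hasDerivAt_id ζ).pow 2).const_add ((ξ + A + 1) ^ 2 + η ^ 2))) ?_
        simp
      exact (h.sqrt h2.ne').congr_deriv (mul_div_mul_left _ _ two_ne_zero)
    refine (chain_rule A _ _ _ _ ζ _ _ e1 e2 rfl rfl hs).congr_deriv ?_
    unfold sVar dVar
    rw [hq, hq4]
    generalize Real.log ((R₁ A ξ η ζ + R₂ A ξ η ζ + 2) / (R₁ A ξ η ζ + R₂ A ξ η ζ - 2)) = L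
    generalize R₁ A ξ η ζ = a at *
    generalize R₂ A ξ η ζ = b at *
    field_simp
    ring
end

section
/- Let 0 ≤ A < 1/3, r > 0 and x ∈ ℝ, and set d = √((A+x−1)² + r²) − √((A+x+1)² + r²) and s = √((A+x−1)² + r²) + √((A+x+1)² + r²). Then s > 2, s² > d², 3A·d + s > 0, and consequently the radial force term 16r(3A·d + s)/((s² − d²)(s² − 4)) is strictly positive. In particular, the reduced Hamiltonian system in cylindrical coordinates has no equilibria: there is no (r, θ, x, P_r, P_θ, P_x) with r > 0 at which ṙ = P_r, θ̇ = P_θ/r², ẋ = P_x, Ṗ_r = P_θ²/r³ − 16r(3A·d + s)/((s² − d²)(s² − 4)), Ṗ_θ = 0 and Ṗ_x all vanish simultaneously, since P_r = P_θ = P_x = 0 would force 16r(3A·d + s)/((s² − d²)(s² − 4)) = 0, which is impossible. -/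
/-- $d = R_1 - R_2$ in cylindrical coordinates $(r,x)$ about the axis of the segment. -/
noncomputable def dCyl (A r x : ℝ) : ℝ :=
  Real.sqrt ((A + x - 1) ^ 2 + r ^ 2) - Real.sqrt ((A + x + 1) ^ 2 + r ^ 2)

/-- $s = R_1 + R_2$ in cylindrical coordinates $(r,x)$ about the axis of the segment. -/
noncomputable def sCyl (A r x : ℝ) : ℝ :=
  Real.sqrt ((A + x - 1) ^ 2 + r ^ 2) + Real.sqrt ((A + x + 1) ^ 2 + r ^ 2)

/-- For $0 \le A < 1/3$, $r > 0$ and $x \in \mathbb{R}$: $s > 2$, $s^2 > d^2$,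
$3Ad + s > 0$, hence the radial force term $16r(3Ad+s)/((s^2-d^2)(s^2-4))$ is strictly
positive; consequently the reduced Hamiltonian system in cylindrical coordinates has no
equilibria: no point $(r,\theta,x,P_r,P_\theta,P_x)$ with $r>0$ makes all right-hand
sides of the equations of motion vanish simultaneously. -/
theorem no_equilibria (A : ℝ) (hA0 : 0 ≤ A) (hA : A < 1 / 3) :
    (∀ r x : ℝ, 0 < r →
      2 < sCyl A r x ∧
      dCyl A r x ^ 2 < sCyl A r x ^ 2 ∧
      0 < 3 * A * dCyl A r x + sCyl A r x ∧
      0 < 16 * r * (3 * A * dCyl A r x + sCyl A r x) /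
        ((sCyl A r x ^ 2 - dCyl A r x ^ 2) * (sCyl A r x ^ 2 - 4))) ∧
    ¬ ∃ r θ x Pr Pθ Px : ℝ, 0 < r ∧
      Pr = 0 ∧
      Pθ / r ^ 2 = 0 ∧
      Px = 0 ∧
      Pθ ^ 2 / r ^ 3 - 16 * r * (3 * A * dCyl A r x + sCyl A r x) /
        ((sCyl A r x ^ 2 - dCyl A r x ^ 2) * (sCyl A r x ^ 2 - 4)) = 0 ∧
      4 * (4 * dCyl A r x + 12 * A * sCyl A r x) /
        (sCyl A r x ^ 2 - dCyl A r x ^ 2) -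
        3 * A * Real.log ((sCyl A r x + 2) / (sCyl A r x - 2)) = 0 := by
  have key : ∀ r x : ℝ, 0 < r →
      2 < sCyl A r x ∧
      dCyl A r x ^ 2 < sCyl A r x ^ 2 ∧
      0 < 3 * A * dCyl A r x + sCyl A r x ∧
      0 < 16 * r * (3 * A * dCyl A r x + sCyl A r x) /
        ((sCyl A r x ^ 2 - dCyl A r x ^ 2) * (sCyl A r x ^ 2 - 4)) := by
    intro r x hr
    have h1 : -(A + x - 1) < Real.sqrt ((A + x - 1) ^ 2 + r ^ 2) :=
      Real.lt_sqrt_of_sq_lt (by nlinarith [pow_pos hr 2])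
    have h2 : A + x + 1 < Real.sqrt ((A + x + 1) ^ 2 + r ^ 2) :=
      Real.lt_sqrt_of_sq_lt (by nlinarith [pow_pos hr 2])
    have p1 : 0 < Real.sqrt ((A + x - 1) ^ 2 + r ^ 2) := Real.sqrt_pos.mpr (by positivity)
    have p2 : 0 < Real.sqrt ((A + x + 1) ^ 2 + r ^ 2) := Real.sqrt_pos.mpr (by positivity)
    have a1 : 2 < sCyl A r x := by unfold sCyl; linarith
    have a2 : dCyl A r x ^ 2 < sCyl A r x ^ 2 := by
      unfold sCyl dCyl; nlinarith [mul_pos p1 p2]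
    have a3 : 0 < 3 * A * dCyl A r x + sCyl A r x := by
      unfold sCyl dCyl
      have q1 := mul_pos p1 (show 0 < 1 + 3 * A by linarith)
      have q2 := mul_pos p2 (show 0 < 1 - 3 * A by linarith)
      linarith
    have a4 : 0 < sCyl A r x ^ 2 - 4 := by nlinarith
    exact ⟨a1, a2, a3, div_pos (by positivity) (mul_pos (by linarith) a4)⟩
  refine ⟨key, ?_⟩
  rintro ⟨r, θ, x, Pr, Pθ, Px, hr, -, hθ, -, h, -⟩
  have h0 : Pθ = 0 := by
    rcases div_eq_zero_iff.mp hθ with h | h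
    · exact h
    · exact absurd h (by positivity)
  have hk := (key r x hr).2.2.2
  rw [h0] at h
  have hz : (0 : ℝ) ^ 2 / r ^ 3 = 0 := by simp
  linarith
end

section
/- Let c ≠ 0 and set s₀ = (c² + √(c⁴ + 16))/2, so that s₀ > 2. Then F₁(s₀, 0; 0) = 0 and F₂(s₀, 0; 0) = 0, and there exist ε > 0, δ > 0 and differentiable functions A ↦ s(A), A ↦ d(A) defined for |A| < ε such that s(0) = s₀, d(0) = 0, F₁(s(A), d(A); A) = 0 and F₂(s(A), d(A); A) = 0 for all |A| < ε, and moreover for each |A| < ε the point (s(A), d(A)) is the unique solution of F₁ = F₂ = 0 in the δ-ball around (s₀, 0). -/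
/-- $F_1(s,d;A) = (d^2-4)^2(s^2-4)(3Ad+s) + 16c^2(d^2-s^2)$, where $c$ is the angular
momentum. -/
noncomputable def F₁ (c A s d : ℝ) : ℝ :=
  (d ^ 2 - 4) ^ 2 * (s ^ 2 - 4) * (3 * A * d + s) + 16 * c ^ 2 * (d ^ 2 - s ^ 2)

/-- $F_2(s,d;A) = 3As + d + \frac34 A (d^2-s^2)\ln\frac{s+2}{s-2}$. -/
noncomputable def F₂ (A s d : ℝ) : ℝ :=
  3 * A * s + d + (3 / 4) * A * (d ^ 2 - s ^ 2) * Real.log ((s + 2) / (s - 2))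

/-- For $c \neq 0$ and $s_0 = (c^2 + \sqrt{c^4+16})/2 > 2$: $F_1(s_0,0;0) = 0$ and
$F_2(s_0,0;0) = 0$, and there exist $\varepsilon,\delta > 0$ and differentiable
functions $A \mapsto s(A), d(A)$ on $|A| < \varepsilon$ with $s(0) = s_0$, $d(0) = 0$,
$F_1(s(A),d(A);A) = F_2(s(A),d(A);A) = 0$, and $(s(A),d(A))$ the unique common zero of
$F_1, F_2$ in the $\delta$-ball around $(s_0,0)$. -/
theorem circular_orbit_implicit_function (c : ℝ) (hc : c ≠ 0) (s₀ : ℝ)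
    (hs₀ : s₀ = (c ^ 2 + Real.sqrt (c ^ 4 + 16)) / 2) :
    2 < s₀ ∧ F₁ c 0 s₀ 0 = 0 ∧ F₂ 0 s₀ 0 = 0 ∧
    ∃ ε > (0 : ℝ), ∃ δ > (0 : ℝ), ∃ sf df : ℝ → ℝ,
      sf 0 = s₀ ∧ df 0 = 0 ∧
      (∀ A : ℝ, |A| < ε → DifferentiableAt ℝ sf A ∧ DifferentiableAt ℝ df A) ∧
      (∀ A : ℝ, |A| < ε → F₁ c A (sf A) (df A) = 0 ∧ F₂ A (sf A) (df A) = 0) ∧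
      (∀ A : ℝ, |A| < ε →
        Real.sqrt ((sf A - s₀) ^ 2 + df A ^ 2) < δ ∧
        ∀ s d : ℝ, Real.sqrt ((s - s₀) ^ 2 + d ^ 2) < δ →
          F₁ c A s d = 0 → F₂ A s d = 0 → s = sf A ∧ d = df A) := by
  have hsq : Real.sqrt (c ^ 4 + 16) ^ 2 = c ^ 4 + 16 := Real.sq_sqrt (by positivity)
  have hc2 : 0 < c ^ 2 := by positivity
  have hq : s₀ ^ 2 = c ^ 2 * s₀ + 4 := by
    rw [hs₀]; nlinarith
  have hs2 : 2 < s₀ := by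
    have h4 : 4 < Real.sqrt (c ^ 4 + 16) := by
      apply Real.lt_sqrt_of_sq_lt
      nlinarith [pow_pos hc2 2]
    rw [hs₀]; linarith
  have hF1 : F₁ c 0 s₀ 0 = 0 := by
    unfold F₁
    linear_combination 16 * s₀ * hq
  have hF2 : F₂ 0 s₀ 0 = 0 := by
    unfold F₂
    ring
  refine ⟨hs2, hF1, hF2, ?_⟩
  set f : ℝ × (ℝ × ℝ) → ℝ × ℝ := fun v => (F₁ c v.1 v.2.1 v.2.2, F₂ v.1 v.2.1 v.2.2) with hf
  set u : ℝ × (ℝ × ℝ) := (0, (s₀, 0)) with hu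
  have hfu : f u = (0, 0) := by simp [hf, hu, hF1, hF2]
  have cdf : ContDiffAt ℝ 1 f u := by
    have h1 : u.2.1 - 2 ≠ 0 := by simp only [hu]; linarith
    have h2 : (u.2.1 + 2) / (u.2.1 - 2) ≠ 0 :=
      div_ne_zero (by simp only [hu]; linarith) h1
    have h3 : ContDiffAt ℝ 1 (fun v : ℝ × (ℝ × ℝ) => (v.2.1 + 2) / (v.2.1 - 2)) u :=
      ContDiffAt.div (by fun_prop) (by fun_prop) h1
    have h4 := h3.log h2
    refine ContDiffAt.prodMk ?_ ?_
    · unfold F₁; fun_prop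
    · unfold F₂
      exact ContDiffAt.add (by fun_prop) (ContDiffAt.mul (by fun_prop) h4)
  have ha : 16 * (s₀ ^ 2 + 4) ≠ 0 := by positivity
  have hinv : (fderiv ℝ f u ∘L .inr ℝ ℝ (ℝ × ℝ)).IsInvertible := by
    let e : (ℝ × ℝ) ≃L[ℝ] (ℝ × ℝ) :=
      (ContinuousLinearEquiv.unitsEquivAut ℝ (Units.mk0 _ ha)).prodCongr
        (ContinuousLinearEquiv.refl ℝ ℝ)
    refine ⟨e, ?_⟩
    have hd : HasFDerivAt f (fderiv ℝ f u) u :=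
      (cdf.differentiableAt one_ne_zero).hasFDerivAt
    have hi : HasFDerivAt (fun p : ℝ × ℝ => ((0 : ℝ), p)) (.inr ℝ ℝ (ℝ × ℝ)) (s₀, (0 : ℝ)) :=
      (ContinuousLinearMap.inr ℝ ℝ (ℝ × ℝ)).hasFDerivAt
    have hcomp : HasFDerivAt (f ∘ fun p : ℝ × ℝ => ((0 : ℝ), p))
      (fderiv ℝ f u ∘L .inr ℝ ℝ (ℝ × ℝ)) (s₀, (0 : ℝ)) := HasFDerivAt.comp _ hd hi
    refine HasFDerivAt.unique ?_ hcomp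
    have hx : HasFDerivAt (fun p : ℝ × ℝ => p.1) (.fst ℝ ℝ ℝ) (s₀, (0 : ℝ)) := hasFDerivAt_fst
    have hy : HasFDerivAt (fun p : ℝ × ℝ => p.2) (.snd ℝ ℝ ℝ) (s₀, (0 : ℝ)) := hasFDerivAt_snd
    have hg := ((((((hy.mul hy).sub_const 4).mul ((hy.mul hy).sub_const 4)).mul
      ((hx.mul hx).sub_const 4)).mul hx).add
      (((hy.mul hy).sub (hx.mul hx)).const_mul (16 * c ^ 2))).prodMk hy
    have hfun : ∀ p : ℝ × ℝ, (f ∘ fun p : ℝ × ℝ => ((0 : ℝ), p)) p =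
        ((p.2 * p.2 - 4) * (p.2 * p.2 - 4) * (p.1 * p.1 - 4) * p.1
        + 16 * c ^ 2 * (p.2 * p.2 - p.1 * p.1), p.2) := fun p => by
      have h1 : F₁ c 0 p.1 p.2 = (p.2 * p.2 - 4) * (p.2 * p.2 - 4) * (p.1 * p.1 - 4) * p.1
        + 16 * c ^ 2 * (p.2 * p.2 - p.1 * p.1) := by unfold F₁; ring
      have h2 : F₂ 0 p.1 p.2 = p.2 := by unfold F₂; ring
      exact Prod.ext h1 h2
    refine (hg.congr_fderiv ?_).congr_of_eventuallyEq (Filter.Eventually.of_forall hfun)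
    ext
    · simp [e]
      linear_combination 32 * hq
    · simp [e]
    · simp [e]
    · simp [e]
  set ψ := cdf.implicitFunction one_ne_zero hinv with hψ
  have h0 : ψ 0 = (s₀, 0) := cdf.implicitFunction_apply_self one_ne_zero hinv
  have hev1 : ∀ᶠ A in nhds (0 : ℝ), f (A, ψ A) = f u :=
    cdf.eventually_apply_implicitFunction one_ne_zero hinv
  have hev2 : ∀ᶠ v in nhds u, f v = f u ↔ ψ v.1 = v.2 :=
    cdf.eventually_apply_eq_iff_implicitFunction one_ne_zero hinv
  have hcd : ContDiffAt ℝ 1 ψ 0 := cdf.contDiffAt_implicitFunction one_ne_zero hinv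
  have hev3 : ∀ᶠ A in nhds (0 : ℝ), DifferentiableAt ℝ ψ A :=
    (hcd.eventually (by simp)).mono fun A h => h.differentiableAt one_ne_zero
  obtain ⟨δ, hδ, hball⟩ := Metric.eventually_nhds_iff.1 hev2
  have hcont : ContinuousAt (fun A => Real.sqrt (((ψ A).1 - s₀) ^ 2 + (ψ A).2 ^ 2)) 0 := by
    have := hcd.continuousAt
    fun_prop
  have hev4 : ∀ᶠ A in nhds (0 : ℝ), Real.sqrt (((ψ A).1 - s₀) ^ 2 + (ψ A).2 ^ 2) < δ := by
    apply hcont.eventually_lt_const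
    simpa [h0] using hδ
  obtain ⟨ε, hε, hall⟩ := Metric.eventually_nhds_iff.1 (hev1.and (hev3.and hev4))
  have key : ∀ A : ℝ, |A| < min ε δ → _ := fun A hA =>
    hall (y := A) (by simpa [Real.dist_eq] using lt_of_lt_of_le hA (min_le_left _ _))
  refine ⟨min ε δ, lt_min hε hδ, δ, hδ, fun A => (ψ A).1, fun A => (ψ A).2,
    by simp [h0], by simp [h0], fun A hA => ?_, fun A hA => ?_, fun A hA => ⟨(key A hA).2.2, ?_⟩⟩
  · have := (key A hA).2.1
    exact ⟨this.fst, this.snd⟩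
  · have := (key A hA).1
    rw [hfu] at this
    exact Prod.mk.inj this
  · intro s d hsd e1 e2
    have b1 : |s - s₀| < δ := lt_of_le_of_lt (Real.abs_le_sqrt (by nlinarith [sq_nonneg d])) hsd
    have b2 : |d| < δ :=
      lt_of_le_of_lt (Real.abs_le_sqrt (by nlinarith [sq_nonneg (s - s₀)])) hsd
    have b3 : |A| < δ := lt_of_lt_of_le hA (min_le_right _ _)
    have hb := hball (y := (A, (s, d))) (by
      simp only [hu, Prod.dist_eq, Real.dist_eq, sub_zero, max_lt_iff]
      exact ⟨b3, b1, b2⟩)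
    have hz : ψ A = (s, d) := hb.1 (by rw [hfu]; simp [hf, e1, e2])
    simp [hz]
end

section
/- Let c ∈ ℝ and set s₀ = (c² + √(c⁴ + 16))/2. At the point (s, d) = (s₀, 0) with A = 0, the partial derivatives of F₁ and F₂ with respect to s and d are ∂F₁/∂s = 8(c⁴ + c²√(c⁴ + 16) + 16), ∂F₁/∂d = 0, ∂F₂/∂s = 0, and ∂F₂/∂d = 1; in particular the Jacobian determinant of (F₁, F₂) with respect to (s, d) at (s₀, 0; 0) equals 8(c⁴ + c²√(c⁴ + 16) + 16) ≠ 0. -/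
/-- At $(s,d) = (s_0,0)$ with $s_0 = (c^2+\sqrt{c^4+16})/2$ and $A = 0$, the partial
derivatives are $\partial F_1/\partial s = 8(c^4 + c^2\sqrt{c^4+16} + 16)$,
$\partial F_1/\partial d = 0$, $\partial F_2/\partial s = 0$,
$\partial F_2/\partial d = 1$; in particular the Jacobian determinant equals
$8(c^4 + c^2\sqrt{c^4+16} + 16) \neq 0$. -/
theorem jacobian_at_circular_orbit (c s₀ : ℝ)
    (hs₀ : s₀ = (c ^ 2 + Real.sqrt (c ^ 4 + 16)) / 2) :
    HasDerivAt (fun s => F₁ c 0 s 0)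
      (8 * (c ^ 4 + c ^ 2 * Real.sqrt (c ^ 4 + 16) + 16)) s₀ ∧
    HasDerivAt (fun d => F₁ c 0 s₀ d) 0 0 ∧
    HasDerivAt (fun s => F₂ 0 s 0) 0 s₀ ∧
    HasDerivAt (fun d => F₂ 0 s₀ d) 1 0 ∧
    8 * (c ^ 4 + c ^ 2 * Real.sqrt (c ^ 4 + 16) + 16) * 1 - 0 * 0 =
      8 * (c ^ 4 + c ^ 2 * Real.sqrt (c ^ 4 + 16) + 16) ∧
    8 * (c ^ 4 + c ^ 2 * Real.sqrt (c ^ 4 + 16) + 16) ≠ 0 := by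
  have hr : Real.sqrt (c ^ 4 + 16) ^ 2 = c ^ 4 + 16 := Real.sq_sqrt (by positivity)
  have hr0 : 0 ≤ Real.sqrt (c ^ 4 + 16) := Real.sqrt_nonneg _
  refine ⟨?_, ?_, ?_, ?_, by ring, by positivity⟩
  · have hf : (fun s => F₁ c 0 s 0) =
        fun s : ℝ => 16 * s ^ 3 - 64 * s - 16 * c ^ 2 * s ^ 2 := by
      funext s
      simp only [F₁]
      ring
    rw [hf]
    have h := (((hasDerivAt_pow 3 s₀).const_mul 16).sub
      ((hasDerivAt_id' s₀).const_mul 64)).sub ((hasDerivAt_pow 2 s₀).const_mul (16 * c ^ 2))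
    refine h.congr_deriv ?_
    subst hs₀
    push_cast
    norm_num
    linear_combination 12 * hr
  · have hf : (fun d => F₁ c 0 s₀ d) =
        fun d : ℝ => ((s₀ ^ 2 - 4) * s₀) * (d ^ 2 - 4) ^ 2
          + 16 * c ^ 2 * (d ^ 2 - s₀ ^ 2) := by
      funext d
      simp only [F₁]
      ring
    rw [hf]
    have h := ((((hasDerivAt_pow 2 (0 : ℝ)).sub_const 4).pow 2).const_mul
      ((s₀ ^ 2 - 4) * s₀)).add
      (((hasDerivAt_pow 2 (0 : ℝ)).sub_const (s₀ ^ 2)).const_mul (16 * c ^ 2))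
    refine h.congr_deriv ?_
    simp
  · have hf : (fun s => F₂ 0 s 0) = fun _ : ℝ => (0 : ℝ) := by
      funext s
      simp [F₂]
    rw [hf]
    exact hasDerivAt_const _ _
  · have hf : (fun d => F₂ 0 s₀ d) = fun d : ℝ => d := by
      funext d
      simp [F₂]
    rw [hf]
    exact hasDerivAt_id' _
end

section
/- Fix A ∈ (0, 1/3) and let Λ(s) = ln((s+2)/(s−2)) and d±(s) = (−2 ± √((3A·s·Λ(s) − 6A)² + 4 − 36A²))/(3A·Λ(s)) for s > 2. Then the following limits hold: d₋(s) → −2 as s → 2⁺; d₋(s) → −∞ as s → +∞; d₊(s) → 2 as s → 2⁺; and d₊(s) → 0 as s → +∞. -/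
open Filter Topology

lemma aux_bound (s : ℝ) (hs : 2 < s) :
    |s * (s * Real.log ((s + 2) / (s - 2)) - 4)| ≤ 16 / (s - 2) := by
  have hs0 : 0 < s := by linarith
  have hx : |2 / s| = 2 / s := abs_of_pos (by positivity)
  have hx1 : 2 / s < 1 := by rw [div_lt_one hs0]; exact hs
  have h1 := Real.abs_log_sub_add_sum_range_le (x := 2 / s) (by rw [hx]; exact hx1) 2
  have h2 := Real.abs_log_sub_add_sum_range_le (x := -(2 / s)) (by rw [abs_neg, hx]; exact hx1) 2
  rw [abs_neg] at h2
  rw [hx] at h1 h2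
  simp only [Finset.sum_range_succ, Finset.sum_range_zero] at h1 h2
  have hl : Real.log ((s + 2) / (s - 2)) = Real.log (1 - -(2 / s)) - Real.log (1 - 2 / s) := by
    have hp : 0 < 2 / s := by positivity
    rw [← Real.log_div (by linarith) (by linarith)]
    congr 1
    have : s - 2 ≠ 0 := by linarith
    have : 1 - 2 / s ≠ 0 := by linarith
    field_simp
    ring
  rw [abs_le] at h1 h2
  have h3 : |Real.log ((s + 2) / (s - 2)) - 4 / s| ≤ 2 * ((2 / s) ^ (2 + 1) / (1 - 2 / s)) := by
    rw [hl, abs_le]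
    have e : 4 / s = 2 * (2 / s) := by ring
    rw [e]
    norm_num at h1 h2 ⊢
    constructor <;> linarith [h1.1, h1.2, h2.1, h2.2]
  have e1 : s * (s * Real.log ((s + 2) / (s - 2)) - 4)
      = s ^ 2 * (Real.log ((s + 2) / (s - 2)) - 4 / s) := by field_simp
  rw [e1, abs_mul, abs_of_pos (by positivity : (0:ℝ) < s ^ 2)]
  calc _ ≤ s ^ 2 * (2 * ((2 / s) ^ (2 + 1) / (1 - 2 / s))) := by gcongr
    _ = 16 / (s - 2) := by
      have : s - 2 ≠ 0 := by linarith
      rw [show 1 - 2 / s = (s - 2) / s by field_simp, div_pow]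
      field_simp
      ring

lemma aux_log_pos (s : ℝ) (hs : 2 < s) : 0 < Real.log ((s + 2) / (s - 2)) := by
  apply Real.log_pos
  rw [lt_div_iff₀ (by linarith)]
  linarith

lemma aux_lim_inf :
    Tendsto (fun s : ℝ => s * (s * Real.log ((s + 2) / (s - 2)) - 4)) atTop (𝓝 0) := by
  have h : Tendsto (fun s : ℝ => 16 / (s - 2)) atTop (𝓝 0) :=
    (tendsto_atTop_add_const_right atTop (-2 : ℝ) tendsto_id).const_div_atTop 16
  refine squeeze_zero_norm' ?_ h
  filter_upwards [eventually_gt_atTop 2] with s hs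
  exact aux_bound s hs

lemma aux_lim_mul :
    Tendsto (fun s : ℝ => s * Real.log ((s + 2) / (s - 2))) atTop (𝓝 4) := by
  have h := (tendsto_inv_atTop_zero (𝕜 := ℝ)).mul aux_lim_inf
  have h2 := h.add_const 4
  norm_num at h2
  refine h2.congr' ?_
  filter_upwards [eventually_gt_atTop 2] with s hs
  have : s ≠ 0 := by linarith
  field_simp
  ring

lemma aux_lim_log :
    Tendsto (fun s : ℝ => Real.log ((s + 2) / (s - 2))) atTop (𝓝 0) := by
  have h := (tendsto_inv_atTop_zero (𝕜 := ℝ)).mul aux_lim_mul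
  norm_num at h
  refine h.congr' ?_
  filter_upwards [eventually_gt_atTop 2] with s hs
  have : s ≠ 0 := by linarith
  field_simp

lemma aux_lim_two :
    Tendsto (fun s : ℝ => Real.log ((s + 2) / (s - 2))) (𝓝[>] 2) atTop := by
  apply Real.tendsto_log_atTop.comp
  have h1 : Tendsto (fun s : ℝ => s + 2) (𝓝[>] 2) (𝓝 (2 + 2)) :=
    ((continuous_id.add continuous_const).tendsto 2).mono_left nhdsWithin_le_nhds
  have h2 : Tendsto (fun s : ℝ => s - 2) (𝓝[>] 2) (𝓝[>] 0) := by
    rw [tendsto_nhdsWithin_iff]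
    constructor
    · have : Tendsto (fun s : ℝ => s - 2) (𝓝[>] 2) (𝓝 (2 - 2)) :=
        ((continuous_id.sub continuous_const).tendsto 2).mono_left nhdsWithin_le_nhds
      simpa using this
    · filter_upwards [self_mem_nhdsWithin] with s hs
      have : (2:ℝ) < s := hs
      simpa using this
  exact h1.pos_mul_atTop (by norm_num) h2.inv_tendsto_nhdsGT_zero

lemma aux_sqrt_inf (A : ℝ) :
    Tendsto (fun s : ℝ => Real.sqrt ((3 * A * s * Real.log ((s + 2) / (s - 2)) - 6 * A) ^ 2 +
          4 - 36 * A ^ 2)) atTop (𝓝 2) := by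
  have h := ((((((aux_lim_mul.const_mul (3 * A)).sub_const (6 * A)).pow 2).add_const 4).sub_const
    (36 * A ^ 2))).sqrt
  have e : √((3 * A * 4 - 6 * A) ^ 2 + 4 - 36 * A ^ 2) = 2 := by
    rw [show (3 * A * 4 - 6 * A) ^ 2 + 4 - 36 * A ^ 2 = 2 ^ 2 by ring]
    exact Real.sqrt_sq (by norm_num)
  rw [e] at h
  refine h.congr fun s => ?_
  simp only [mul_assoc]

lemma aux_sqrt_two (A : ℝ) (hA : 0 < A) :
    Tendsto (fun s : ℝ => Real.sqrt ((3 * A * s * Real.log ((s + 2) / (s - 2)) - 6 * A) ^ 2 +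
          4 - 36 * A ^ 2) / (3 * A * Real.log ((s + 2) / (s - 2)))) (𝓝[>] 2) (𝓝 2) := by
  have hi := aux_lim_two.inv_tendsto_atTop
  have hid : Tendsto (fun s : ℝ => s) (𝓝[>] 2) (𝓝 2) := nhdsWithin_le_nhds
  have h := (((hid.sub (hi.const_mul 2)).pow 2).add
    ((hi.pow 2).const_mul ((4 - 36 * A ^ 2) / (9 * A ^ 2)))).sqrt
  have e : √((2 - 2 * 0) ^ 2 + (4 - 36 * A ^ 2) / (9 * A ^ 2) * 0 ^ 2) = 2 := by
    rw [show (2 - 2 * 0) ^ 2 + (4 - 36 * A ^ 2) / (9 * A ^ 2) * 0 ^ 2 = (2:ℝ) ^ 2 by ring]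
    exact Real.sqrt_sq (by norm_num)
  rw [e] at h
  refine h.congr' ?_
  filter_upwards [self_mem_nhdsWithin] with s hs
  have hL := aux_log_pos s hs
  simp only [Pi.inv_apply]
  generalize Real.log ((s + 2) / (s - 2)) = L at *
  have hp : 0 < 3 * A * L := by positivity
  rw [← Real.sqrt_sq hp.le, ← Real.sqrt_div' _ (by positivity)]
  congr 1
  field_simp
  ring

lemma aux_const_two (A : ℝ) (hA : 0 < A) :
    Tendsto (fun s : ℝ => -2 / (3 * A * Real.log ((s + 2) / (s - 2)))) (𝓝[>] 2) (𝓝 0) :=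
  (aux_lim_two.const_mul_atTop (by positivity : 0 < 3 * A)).const_div_atTop (-2)

/-- For fixed $A \in (0,1/3)$, the circular-orbit roots
$d_\pm(s) = \frac{-2 \pm \sqrt{(3As\Lambda(s)-6A)^2+4-36A^2}}{3A\Lambda(s)}$, with
$\Lambda(s) = \ln\frac{s+2}{s-2}$, satisfy: $d_-(s) \to -2$ as $s \to 2^+$,
$d_-(s) \to -\infty$ as $s \to +\infty$, $d_+(s) \to 2$ as $s \to 2^+$, and
$d_+(s) \to 0$ as $s \to +\infty$. -/
theorem limits_of_d_pm (A : ℝ) (hA : 0 < A) (hA' : A < 1 / 3) :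
    Tendsto (fun s : ℝ =>
        (-2 - Real.sqrt ((3 * A * s * Real.log ((s + 2) / (s - 2)) - 6 * A) ^ 2 +
          4 - 36 * A ^ 2)) / (3 * A * Real.log ((s + 2) / (s - 2))))
      (𝓝[>] 2) (𝓝 (-2)) ∧
    Tendsto (fun s : ℝ =>
        (-2 - Real.sqrt ((3 * A * s * Real.log ((s + 2) / (s - 2)) - 6 * A) ^ 2 +
          4 - 36 * A ^ 2)) / (3 * A * Real.log ((s + 2) / (s - 2))))
      atTop atBot ∧
    Tendsto (fun s : ℝ =>
        (-2 + Real.sqrt ((3 * A * s * Real.log ((s + 2) / (s - 2)) - 6 * A) ^ 2 +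
          4 - 36 * A ^ 2)) / (3 * A * Real.log ((s + 2) / (s - 2))))
      (𝓝[>] 2) (𝓝 2) ∧
    Tendsto (fun s : ℝ =>
        (-2 + Real.sqrt ((3 * A * s * Real.log ((s + 2) / (s - 2)) - 6 * A) ^ 2 +
          4 - 36 * A ^ 2)) / (3 * A * Real.log ((s + 2) / (s - 2))))
      atTop (𝓝 0) := by
  refine ⟨?_, ?_, ?_, ?_⟩
  · have h := (aux_const_two A hA).sub (aux_sqrt_two A hA)
    rw [zero_sub] at h
    exact h.congr fun s => (sub_div _ _ _).symm
  · have h1 := (aux_sqrt_inf A).const_sub (-2)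
    have h2 : Tendsto (fun s : ℝ => 3 * A * Real.log ((s + 2) / (s - 2))) atTop (𝓝[>] 0) := by
      rw [tendsto_nhdsWithin_iff]
      constructor
      · simpa using aux_lim_log.const_mul (3 * A)
      · filter_upwards [eventually_gt_atTop 2] with s hs
        have := aux_log_pos s hs
        exact Set.mem_Ioi.2 (by positivity)
    exact h1.neg_mul_atTop (by norm_num) h2.inv_tendsto_nhdsGT_zero
  · have h := (aux_const_two A hA).add (aux_sqrt_two A hA)
    rw [zero_add] at h
    exact h.congr fun s => (add_div _ _ _).symm
  · have h := (aux_lim_inf.const_mul (3 * A)).div ((aux_sqrt_inf A).const_add 2) (by norm_num)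
    rw [mul_zero, zero_div] at h
    refine h.congr' ?_
    filter_upwards [eventually_gt_atTop 2] with s hs
    have hL := aux_log_pos s hs
    simp only [Pi.div_apply]
    generalize Real.log ((s + 2) / (s - 2)) = L at *
    have hA2 : 0 ≤ (3 * A * s * L - 6 * A) ^ 2 + 4 - 36 * A ^ 2 := by
      nlinarith [sq_nonneg (3 * A * s * L - 6 * A)]
    have hq := Real.sq_sqrt hA2
    have hq0 := Real.sqrt_nonneg ((3 * A * s * L - 6 * A) ^ 2 + 4 - 36 * A ^ 2)
    generalize √((3 * A * s * L - 6 * A) ^ 2 + 4 - 36 * A ^ 2) = q at *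
    rw [div_eq_div_iff (by positivity) (by positivity)]
    linear_combination -hq
end

section
/- Let c ≠ 0, set s₀ = (c² + √(c⁴ + 16))/2, and suppose s, d : (−ε, ε) → ℝ are differentiable functions with s(0) = s₀, d(0) = 0, and F₁(s(A), d(A); A) = 0 and F₂(s(A), d(A); A) = 0 for all |A| < ε. Then d'(0) = (3x/16)·(x·ln((x+4)/(x−4)) − 8), where x = c² + √(c⁴ + 16) = 2s₀ > 4. -/
/-- If $c \neq 0$, $s_0 = (c^2+\sqrt{c^4+16})/2$, and $s(A), d(A)$ are differentiable
on $(-\varepsilon,\varepsilon)$ with $s(0) = s_0$, $d(0) = 0$ and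
$F_1(s(A),d(A);A) = F_2(s(A),d(A);A) = 0$, then
$d'(0) = \frac{3x}{16}\left(x\ln\frac{x+4}{x-4} - 8\right)$, where
$x = c^2 + \sqrt{c^4+16} = 2s_0 > 4$. -/
theorem first_order_shift (c : ℝ) (hc : c ≠ 0) (s₀ x : ℝ)
    (hs₀ : s₀ = (c ^ 2 + Real.sqrt (c ^ 4 + 16)) / 2)
    (hx : x = c ^ 2 + Real.sqrt (c ^ 4 + 16))
    (ε : ℝ) (hε : 0 < ε) (sf df : ℝ → ℝ)
    (hsdiff : ∀ A : ℝ, |A| < ε → DifferentiableAt ℝ sf A)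
    (hddiff : ∀ A : ℝ, |A| < ε → DifferentiableAt ℝ df A)
    (hsf0 : sf 0 = s₀) (hdf0 : df 0 = 0)
    (hF : ∀ A : ℝ, |A| < ε → F₁ c A (sf A) (df A) = 0 ∧ F₂ A (sf A) (df A) = 0) :
    deriv df 0 = (3 * x / 16) * (x * Real.log ((x + 4) / (x - 4)) - 8) := by
  have h0 : |(0:ℝ)| < ε := by simpa using hε
  have hs := (hsdiff 0 h0).hasDerivAt
  have hd := (hddiff 0 h0).hasDerivAt
  have hs2 : 2 < s₀ := by
    have hc2 : 0 < c ^ 2 := by positivity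
    have h4 : 4 ≤ Real.sqrt (c ^ 4 + 16) := by
      apply Real.le_sqrt_of_sq_le
      have : 0 ≤ c ^ 4 := by positivity
      linarith
    rw [hs₀]; linarith
  have hxs : x = 2 * s₀ := by rw [hx, hs₀]; ring
  have hlog : DifferentiableAt ℝ (fun A => Real.log ((sf A + 2) / (sf A - 2))) 0 := by
    have hne : sf 0 - 2 ≠ 0 := by rw [hsf0]; linarith
    have hne2 : (sf 0 + 2) / (sf 0 - 2) ≠ 0 := by
      apply div_ne_zero _ hne
      rw [hsf0]; linarith
    exact (((hsdiff 0 h0).add_const 2).div ((hsdiff 0 h0).sub_const 2) hne).log hne2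
  have hg : DifferentiableAt ℝ (fun A => -(3 * sf A + (3 / 4) * (df A ^ 2 - sf A ^ 2) *
      Real.log ((sf A + 2) / (sf A - 2)))) 0 :=
    (((hsdiff 0 h0).const_mul 3).add
      (((((hddiff 0 h0).pow 2).sub ((hsdiff 0 h0).pow 2)).const_mul (3 / 4)).mul hlog)).neg
  have hprod := (hasDerivAt_id (0:ℝ)).mul hg.hasDerivAt
  have heq : df =ᶠ[nhds 0] (id * fun A => -(3 * sf A + (3 / 4) * (df A ^ 2 - sf A ^ 2) *
      Real.log ((sf A + 2) / (sf A - 2)))) := by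
    filter_upwards [Metric.ball_mem_nhds (0:ℝ) hε] with A hA
    have h2 := (hF A (by simpa using hA)).2
    unfold F₂ at h2
    simp only [Pi.mul_apply, id]
    linarith
  rw [(hprod.congr_of_eventuallyEq heq).deriv]
  have harg : (x + 4) / (x - 4) = (s₀ + 2) / (s₀ - 2) := by
    have h1 : s₀ - 2 ≠ 0 := by linarith
    have h2 : 2 * s₀ - 4 ≠ 0 := by linarith
    rw [hxs]
    rw [div_eq_div_iff h2 h1]
    ring
  rw [harg, hxs]
  simp only [hsf0, hdf0, id]
  ring
end

section
/- For every real x > 4, the inequality x·ln((x+4)/(x−4)) > 8 holds; equivalently, the quantity d'(0) = (3x/16)·(x·ln((x+4)/(x−4)) − 8) is strictly positive for every x > 4. In particular, for every angular momentum value c ≠ 0 (for which x = c² + √(c⁴ + 16) > 4), the circular orbit shifts to positive d at first order in the density-slope parameter A. -/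
theorem aux_log (x : ℝ) (hx : 4 < x) : 8 < x * Real.log ((x + 4) / (x - 4)) := by
  have hx0 : 0 < x := by linarith
  have hy0 : 0 < 4 / x := by positivity
  have hy1 : 4 / x < 1 := by rw [div_lt_one hx0]; exact hx
  have h := Real.hasSum_log_sub_log_of_abs_lt_one (x := 4 / x)
    (by rw [abs_of_pos hy0]; exact hy1)
  have h2 := sum_le_hasSum (Finset.range 2) (fun i _ => by positivity) h
  rw [← Real.log_div (by linarith) (by linarith)] at h2
  have e : (1 + 4 / x) / (1 - 4 / x) = (x + 4) / (x - 4) := by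
    have : x - 4 ≠ 0 := by linarith
    have h3 : 1 - 4 / x ≠ 0 := by linarith
    rw [div_eq_div_iff h3 this]
    field_simp
  rw [e] at h2
  simp only [Finset.sum_range_succ, Finset.sum_range_zero] at h2
  norm_num at h2
  have h4 : 2 * (4 / x) < Real.log ((x + 4) / (x - 4)) := by
    have : 0 < (4 / x) ^ 3 := by positivity
    linarith
  calc (8 : ℝ) = x * (2 * (4 / x)) := by field_simp; norm_num
    _ < _ := mul_lt_mul_of_pos_left h4 hx0

theorem aux_pos (x : ℝ) (hx : 4 < x) :
    0 < (3 * x / 16) * (x * Real.log ((x + 4) / (x - 4)) - 8) := by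
  have := aux_log x hx
  exact mul_pos (by linarith) (by linarith)

/-- For every $x > 4$, $x\ln\frac{x+4}{x-4} > 8$; equivalently
$d'(0) = \frac{3x}{16}\left(x\ln\frac{x+4}{x-4} - 8\right) > 0$.  In particular, for
every $c \neq 0$ one has $x = c^2 + \sqrt{c^4+16} > 4$ and the corresponding $d'(0)$ is
strictly positive, so the circular orbit shifts to positive $d$ at first order in the
density-slope parameter $A$. -/
theorem dprime_positive :
    (∀ x : ℝ, 4 < x →
      8 < x * Real.log ((x + 4) / (x - 4)) ∧
      0 < (3 * x / 16) * (x * Real.log ((x + 4) / (x - 4)) - 8)) ∧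
    (∀ c : ℝ, c ≠ 0 →
      4 < c ^ 2 + Real.sqrt (c ^ 4 + 16) ∧
      0 < (3 * (c ^ 2 + Real.sqrt (c ^ 4 + 16)) / 16) *
        ((c ^ 2 + Real.sqrt (c ^ 4 + 16)) *
          Real.log ((c ^ 2 + Real.sqrt (c ^ 4 + 16) + 4) /
            (c ^ 2 + Real.sqrt (c ^ 4 + 16) - 4)) - 8)) := by
  refine ⟨fun x hx => ⟨aux_log x hx, aux_pos x hx⟩, fun c hc => ?_⟩
  have h : 4 < c ^ 2 + Real.sqrt (c ^ 4 + 16) := by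
    have h1 : 0 < c ^ 2 := by positivity
    have h2 : (4 : ℝ) ≤ Real.sqrt (c ^ 4 + 16) := by
      apply Real.le_sqrt_of_sq_le
      nlinarith [sq_nonneg (c ^ 2)]
    linarith
  exact ⟨h, aux_pos _ h⟩
end

section
/- The function g(x) = (3x/16)·(x·ln((x+4)/(x−4)) − 8), defined for x > 4, is strictly decreasing on (4, +∞) and tends to 0 as x → +∞; consequently g(x) > 0 for all x ∈ (4, +∞). -/
open Filter Topology

lemma hasSum_congr_aux {f u : ℕ → ℝ} {a v : ℝ} (h : HasSum f a) (hf : ∀ k, u k = f k)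
    (ha : v = a) : HasSum u v := by
  rw [ha, funext hf]; exact h

lemma g_hasSum {x : ℝ} (hx : 4 < x) :
    HasSum (fun k : ℕ => 6 / (2 * (k : ℝ) + 3) * (4 / x) ^ (2 * k + 1))
      ((3 * x / 16) * (x * Real.log ((x + 4) / (x - 4)) - 8)) := by
  have hx0 : 0 < x := by linarith
  have ht : |4 / x| < 1 := by
    rw [abs_of_pos (by positivity), div_lt_one hx0]; exact hx
  have h := Real.hasSum_log_sub_log_of_abs_lt_one ht
  have h1 := ((hasSum_nat_add_iff' 1).mpr h).mul_left (3 * x ^ 2 / 16)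
  have e : Real.log (1 + 4 / x) - Real.log (1 - 4 / x) = Real.log ((x + 4) / (x - 4)) := by
    have h4 : x - 4 ≠ 0 := by linarith
    have h5 : (1 : ℝ) - 4 / x ≠ 0 := by
      have : 4 / x < 1 := by rw [div_lt_one hx0]; exact hx
      linarith
    rw [← Real.log_div (by positivity) h5]
    congr 1
    field_simp
  rw [e] at h1
  refine (hasSum_congr_aux h1 (fun k => ?_) ?_)
  · show _ = 3 * x ^ 2 / 16 * _
    push_cast
    have : (4 / x) ^ (2 * (k + 1) + 1) = (4 / x) ^ (2 * k + 1) * (16 / x ^ 2) := by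
      rw [show 2 * (k + 1) + 1 = (2 * k + 1) + 2 by ring, pow_add]
      congr 1
      rw [div_pow]; norm_num
    rw [this]
    have h3 : 2 * ((k : ℝ) + 1) + 1 = 2 * k + 3 := by ring
    rw [h3]
    have : (2 * (k : ℝ) + 3) ≠ 0 := by positivity
    generalize (4 / x) ^ (2 * k + 1) = y
    field_simp
    try ring
  · simp
    field_simp
    try ring

lemma g_pos {x : ℝ} (hx : 4 < x) :
    0 < (3 * x / 16) * (x * Real.log ((x + 4) / (x - 4)) - 8) := by
  have hx0 : 0 < x := by linarith
  have h := g_hasSum hx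
  rw [← h.tsum_eq]
  exact h.summable.tsum_pos (fun k => by positivity) 0 (by positivity)

lemma g_le {x : ℝ} (hx : 8 ≤ x) :
    (3 * x / 16) * (x * Real.log ((x + 4) / (x - 4)) - 8) ≤ 12 / x := by
  have hx0 : 0 < x := by linarith
  have h := g_hasSum (show 4 < x by linarith)
  have ht : 4 / x ≤ 1 / 2 := by rw [div_le_iff₀ hx0]; linarith
  have ht0 : 0 < 4 / x := by positivity
  have h2 : (4 / x) ^ 2 ≤ 1 / 4 := by nlinarith
  have hg := (hasSum_geometric_of_lt_one (r := (1 / 4 : ℝ)) (by norm_num)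
    (by norm_num)).mul_left (2 * (4 / x))
  have hle := hasSum_le (fun k => ?_) h hg
  · refine hle.trans ?_
    have : 0 < x⁻¹ := by positivity
    have e1 : 4 / x = 4 * x⁻¹ := by ring
    have e2 : 12 / x = 12 * x⁻¹ := by ring
    rw [e1, e2]
    norm_num
    linarith
  · have a1 : 6 / (2 * (k : ℝ) + 3) ≤ 2 := by
      rw [div_le_iff₀ (by positivity)]
      have : (0 : ℝ) ≤ k := by positivity
      linarith
    have a2 : ((4 / x) ^ 2) ^ k ≤ (1 / 4) ^ k := pow_le_pow_left₀ (by positivity) h2 k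
    rw [pow_succ, pow_mul]
    calc _ ≤ 2 * ((1 / 4) ^ k * (4 / x)) := by gcongr
      _ = _ := by ring

/-- The function $g(x) = \frac{3x}{16}\left(x\ln\frac{x+4}{x-4} - 8\right)$, defined
for $x > 4$, is strictly decreasing on $(4,+\infty)$ and tends to $0$ as
$x \to +\infty$; consequently $g(x) > 0$ for all $x \in (4,+\infty)$. -/
theorem g_strict_anti_tendsto_zero_positive :
    StrictAntiOn (fun x : ℝ => (3 * x / 16) * (x * Real.log ((x + 4) / (x - 4)) - 8))
      (Set.Ioi (4 : ℝ)) ∧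
    Tendsto (fun x : ℝ => (3 * x / 16) * (x * Real.log ((x + 4) / (x - 4)) - 8))
      atTop (𝓝 0) ∧
    ∀ x : ℝ, 4 < x →
      0 < (3 * x / 16) * (x * Real.log ((x + 4) / (x - 4)) - 8) := by
  refine ⟨?_, ?_, fun x hx => g_pos hx⟩
  · intro a ha b hb hab
    have ha4 : 4 < a := ha
    have hb4 : 4 < b := hb
    have ha0 : 0 < a := by linarith
    have hb0 : 0 < b := by linarith
    have ht : 4 / b < 4 / a := by gcongr
    refine hasSum_lt (i := 0) (fun k => ?_) ?_ (g_hasSum hb4) (g_hasSum ha4)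
    · show 6 / (2 * (k : ℝ) + 3) * (4 / b) ^ (2 * k + 1) ≤ 6 / (2 * (k : ℝ) + 3) * (4 / a) ^ (2 * k + 1)
      gcongr
    · norm_num
      linarith
  · refine tendsto_of_tendsto_of_tendsto_of_le_of_le' tendsto_const_nhds
      (tendsto_const_nhds.div_atTop tendsto_id : Tendsto (fun x : ℝ => 12 / x) atTop (𝓝 0)) ?_ ?_
    · filter_upwards [eventually_gt_atTop 4] with x hx using (g_pos hx).le
    · filter_upwards [eventually_ge_atTop 8] with x hx using g_le hx
end
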